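/- Let u : ℝ^3 → ℂ be smooth, radial, and rapidly decaying, and let f₀ : [0,∞) → [0,∞) be smooth, nondecreasing, with f₀ = 0 on [0, m] and f₀ bounded. Then ∫_{|x|>m} f₀(|x|) |u(x)|⁶ dx ≤ C ∫_m^∞ f₀'(s) ‖u‖⁶_{L⁶(|x|>s)} ds + f₀(∞) · 0, and furthermore using ‖u‖⁶_{L⁶(|x|>s)} ≤ C s^{−4} ‖∇u‖²_{L²(|x|>s)} ‖u‖⁴_{L²(|x|>s)} one gets ∫_{|x|>m} f₀(|x|)|u|⁶ dx ≤ C m^{−4} ‖u‖⁴_{L²} ∫_{|x|>m} f₀(|x|) |∂_r u|² dx. -/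

import Mathlib

open MeasureTheory Set

/-!
Since `f₀` vanishes at `m`, writing `f₀ |x| = ∫_m^{|x|} f₀'` and exchanging integrals turns the
`f₀`-weighted integral of any density into the `f₀'`-average of its exterior integrals
`∫_{|x| > s}`. On a ray, Agmon's inequality `|u(r)|⁴ ≤ 4 ∫_r^∞ |u|² · ∫_r^∞ |u'|²` and the
monotonicity of the polar weight `r^{d-1}` give the radial Sobolev bound
`‖u‖⁶_{L⁶(|x|>s)} ≤ C s^{-2(d-1)} ‖u‖⁴_{L²(|x|>s)} ‖∂_r u‖²_{L²(|x|>s)}`.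
Insert it for each `s > m`, bound `s^{-2(d-1)}` by `m^{-2(d-1)}`, and exchange integrals
backwards for the density `|∂_r u|²`.
-/

open Filter Topology Module

section LayerCake

variable {α : Type*} [MeasurableSpace α] {μ : Measure α} {ρ φ : α → ℝ} {a f : ℝ → ℝ}
  {m : ℝ}

lemma integrable_indicator_lt_mul (hρ : Measurable ρ) (ha : IntegrableOn a (Ioi m))
    (hφ : IntegrableOn φ {x | m < ρ x} μ) :
    Integrable ({p : ℝ × α | p.1 < ρ p.2}.indicator fun p => a p.1 * φ p.2)
      ((volume.restrict (Ioi m)).prod (μ.restrict {x | m < ρ x})) :=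
  (Integrable.mul_prod ha hφ).indicator
    (measurableSet_lt measurable_fst (hρ.comp measurable_snd))

lemma mul_setIntegral_lt_eq (hρ : Measurable ρ) {s : ℝ} (hs : s ∈ Ioi m) :
    a s * ∫ x in {x | s < ρ x}, φ x ∂μ = ∫ x in {x | m < ρ x},
      {p : ℝ × α | p.1 < ρ p.2}.indicator (fun p => a p.1 * φ p.2) (s, x) ∂μ := by
  have hinter : {x | m < ρ x} ∩ {x | s < ρ x} = {x | s < ρ x} :=
    inter_eq_right.2 fun x hx => (mem_Ioi.1 hs).trans hx
  rw [← integral_const_mul, ← hinter,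
    ← setIntegral_indicator (measurableSet_lt measurable_const hρ)]
  rfl

lemma integrableOn_mul_setIntegral_lt [SFinite μ] (hρ : Measurable ρ) (ha : IntegrableOn a (Ioi m))
    (hφ : IntegrableOn φ {x | m < ρ x} μ) :
    IntegrableOn (fun s => a s * ∫ x in {x | s < ρ x}, φ x ∂μ) (Ioi m) :=
  (integrableOn_congr_fun (fun _ hs => mul_setIntegral_lt_eq hρ hs) measurableSet_Ioi).2
    (integrable_indicator_lt_mul hρ ha hφ).integral_prod_left

lemma integral_mul_setIntegral_lt [SFinite μ] (hρ : Measurable ρ)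
    (ha : IntegrableOn a (Ioi m)) (hφ : IntegrableOn φ {x | m < ρ x} μ) :
    ∫ s in Ioi m, a s * ∫ x in {x | s < ρ x}, φ x ∂μ =
      ∫ x in {x | m < ρ x}, (∫ s in Ioo m (ρ x), a s) * φ x ∂μ := by
  rw [setIntegral_congr_fun measurableSet_Ioi fun s hs => mul_setIntegral_lt_eq hρ hs,
    integral_integral_swap (f := fun s x =>
      {p : ℝ × α | p.1 < ρ p.2}.indicator (fun p => a p.1 * φ p.2) (s, x))
      (integrable_indicator_lt_mul hρ ha hφ)]
  congr 1 with x
  rw [← integral_mul_const, ← Ioi_inter_Iio, ← setIntegral_indicator measurableSet_Iio]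
  rfl

lemma setIntegral_comp_mul_eq_integral_deriv_mul [SFinite μ] (hρ : Measurable ρ)
    (hφ : IntegrableOn φ {x | m < ρ x} μ) (hfc : ContinuousOn f (Ici m))
    (hfd : DifferentiableOn ℝ f (Ioi m)) (hfm : f m = 0)
    (hf' : IntegrableOn (deriv f) (Ioi m)) :
    ∫ x in {x | m < ρ x}, f (ρ x) * φ x ∂μ =
      ∫ s in Ioi m, deriv f s * ∫ x in {x | s < ρ x}, φ x ∂μ := by
  rw [integral_mul_setIntegral_lt hρ hf' hφ]
  refine setIntegral_congr_fun (measurableSet_lt measurable_const hρ) fun x (hx : m < ρ x) => ?_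
  have hftc : ∫ s in m..ρ x, deriv f s = f (ρ x) - f m :=
    intervalIntegral.integral_eq_sub_of_hasDerivAt_of_le hx.le (hfc.mono Icc_subset_Ici_self)
      (fun s hs => (hfd.differentiableAt (Ioi_mem_nhds hs.1)).hasDerivAt)
      ((intervalIntegrable_iff_integrableOn_Ioc_of_le hx.le).2
        (hf'.mono_set Ioc_subset_Ioi_self))
  rw [← integral_Ioc_eq_integral_Ioo, ← intervalIntegral.integral_of_le hx.le, hftc, hfm,
    sub_zero]

end LayerCake

lemma deriv_nonneg_of_monotoneOn_Ici {f : ℝ → ℝ} {m s : ℝ} (hf : MonotoneOn f (Ici m))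
    (hs : m < s) : 0 ≤ deriv f s := by
  rw [← derivWithin_of_mem_nhds (Ici_mem_nhds hs)]
  exact hf.derivWithin_nonneg

lemma exists_tendsto_atTop_of_monotoneOn_Ici {f : ℝ → ℝ} {m : ℝ} (hf : MonotoneOn f (Ici m))
    (hbdd : BddAbove (f '' Ici m)) : ∃ l, Tendsto f atTop (𝓝 l) := by
  have hmono : Monotone fun s => f (max m s) := fun _ _ hst =>
    hf (le_max_left m _) (le_max_left m _) (max_le_max_left m hst)
  have hbdd' : BddAbove (range fun s => f (max m s)) :=
    hbdd.mono (range_subset_iff.2 fun _ => mem_image_of_mem f (le_max_left m _))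
  refine ⟨_, (tendsto_atTop_ciSup hmono hbdd').congr' ?_⟩
  filter_upwards [eventually_ge_atTop m] with s hs
  rw [max_eq_right hs]

lemma integrableOn_deriv_of_monotoneOn_Ici {f : ℝ → ℝ} {m : ℝ} (hfc : ContinuousOn f (Ici m))
    (hfd : DifferentiableOn ℝ f (Ioi m)) (hf : MonotoneOn f (Ici m))
    (hbdd : BddAbove (f '' Ici m)) : IntegrableOn (deriv f) (Ioi m) := by
  obtain ⟨l, hl⟩ := exists_tendsto_atTop_of_monotoneOn_Ici hf hbdd
  exact integrableOn_Ioi_deriv_of_nonneg (hfc m self_mem_Ici)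
    (fun s hs => (hfd.differentiableAt (Ioi_mem_nhds hs)).hasDerivAt)
    (fun s hs => deriv_nonneg_of_monotoneOn_Ici hf hs) hl

lemma sq_integral_norm_mul_norm_le {α E F : Type*} [MeasurableSpace α] {μ : Measure α}
    [NormedAddCommGroup E] [NormedAddCommGroup F] {f : α → E} {g : α → F}
    (hf : MemLp f 2 μ) (hg : MemLp g 2 μ) :
    (∫ x, ‖f x‖ * ‖g x‖ ∂μ) ^ 2 ≤ (∫ x, ‖f x‖ ^ 2 ∂μ) * ∫ x, ‖g x‖ ^ 2 ∂μ := by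
  have holder := integral_mul_norm_le_Lp_mul_Lq Real.HolderConjugate.two_two
    (f := fun x => ‖f x‖) (g := fun x => ‖g x‖)
    (by simpa using hf.norm) (by simpa using hg.norm)
  simp only [norm_norm, Real.rpow_two, ← Real.sqrt_eq_rpow] at holder
  calc (∫ x, ‖f x‖ * ‖g x‖ ∂μ) ^ 2
      ≤ (√(∫ x, ‖f x‖ ^ 2 ∂μ) * √(∫ x, ‖g x‖ ^ 2 ∂μ)) ^ 2 := by gcongr
    _ = (∫ x, ‖f x‖ ^ 2 ∂μ) * ∫ x, ‖g x‖ ^ 2 ∂μ := by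
      rw [mul_pow, Real.sq_sqrt (by positivity), Real.sq_sqrt (by positivity)]

lemma memLp_two_norm_of_integrable_norm_sq {α E : Type*} [MeasurableSpace α] {μ : Measure α}
    [NormedAddCommGroup E] {f : α → E} (hf : Integrable (fun x => ‖f x‖ ^ 2) μ) :
    MemLp (fun x => ‖f x‖) 2 μ := by
  have hmeas : AEMeasurable (fun x => ‖f x‖) μ := by
    simpa only [Real.sqrt_sq (norm_nonneg _)] using hf.aestronglyMeasurable.aemeasurable.sqrt
  exact (memLp_two_iff_integrable_sq hmeas.aestronglyMeasurable).2 hf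

section Agmon

variable {F : Type*} [NormedAddCommGroup F] [InnerProductSpace ℝ F] {g g' : ℝ → F} {r : ℝ}

lemma norm_sq_le_two_mul_integral_Ioi (hderiv : ∀ s ∈ Ici r, HasDerivAt g (g' s) s)
    (hg : IntegrableOn (fun s => ‖g s‖ ^ 2) (Ioi r))
    (hg' : IntegrableOn (fun s => ‖g' s‖ ^ 2) (Ioi r)) :
    ‖g r‖ ^ 2 ≤ 2 * ∫ s in Ioi r, ‖g s‖ * ‖g' s‖ := by
  have hsq : ∀ s ∈ Ici r, HasDerivAt (fun s => ‖g s‖ ^ 2) (2 * inner ℝ (g s) (g' s)) s :=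
    fun s hs => (hderiv s hs).norm_sq
  have hprod : IntegrableOn (fun s => ‖g s‖ * ‖g' s‖) (Ioi r) :=
    (memLp_two_norm_of_integrable_norm_sq hg).integrable_mul
      (memLp_two_norm_of_integrable_norm_sq hg')
  have hmeas : AEStronglyMeasurable (fun s => 2 * inner ℝ (g s) (g' s))
      (volume.restrict (Ioi r)) :=
    (measurable_deriv fun s => ‖g s‖ ^ 2).aestronglyMeasurable.congr <|
      (ae_restrict_mem measurableSet_Ioi).mono fun s hs => (hsq s (Ioi_subset_Ici_self hs)).deriv
  have hbound : ∀ s, |2 * inner ℝ (g s) (g' s)| ≤ 2 * (‖g s‖ * ‖g' s‖) := fun s => by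
    rw [abs_mul, abs_two]
    gcongr
    exact abs_real_inner_le_norm _ _
  have hint : IntegrableOn (fun s => 2 * inner ℝ (g s) (g' s)) (Ioi r) :=
    (hprod.const_mul 2).mono' hmeas (ae_of_all _ hbound)
  have hlim : Tendsto (fun s => ‖g s‖ ^ 2) atTop (𝓝 0) :=
    tendsto_zero_of_hasDerivAt_of_integrableOn_Ioi
      (fun s hs => hsq s (Ioi_subset_Ici_self hs)) hint hg
  calc ‖g r‖ ^ 2 = ∫ s in Ioi r, -(2 * inner ℝ (g s) (g' s)) := by
        rw [integral_neg, integral_Ioi_of_hasDerivAt_of_tendsto' hsq hint hlim, zero_sub, neg_neg]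
    _ ≤ ∫ s in Ioi r, 2 * (‖g s‖ * ‖g' s‖) :=
        integral_mono hint.neg (hprod.const_mul 2) fun s => (neg_le_abs _).trans (hbound s)
    _ = 2 * ∫ s in Ioi r, ‖g s‖ * ‖g' s‖ := integral_const_mul _ _

lemma agmon_inequality_Ioi (hderiv : ∀ s ∈ Ici r, HasDerivAt g (g' s) s)
    (hg : IntegrableOn (fun s => ‖g s‖ ^ 2) (Ioi r))
    (hg' : IntegrableOn (fun s => ‖g' s‖ ^ 2) (Ioi r)) :
    ‖g r‖ ^ 4 ≤ 4 * (∫ s in Ioi r, ‖g s‖ ^ 2) * ∫ s in Ioi r, ‖g' s‖ ^ 2 := by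
  have cauchy_schwarz := sq_integral_norm_mul_norm_le
    (memLp_two_norm_of_integrable_norm_sq hg) (memLp_two_norm_of_integrable_norm_sq hg')
  simp only [norm_norm] at cauchy_schwarz
  calc ‖g r‖ ^ 4 = (‖g r‖ ^ 2) ^ 2 := by ring
    _ ≤ (2 * ∫ s in Ioi r, ‖g s‖ * ‖g' s‖) ^ 2 := by
      gcongr
      exact norm_sq_le_two_mul_integral_Ioi hderiv hg hg'
    _ = 4 * (∫ s in Ioi r, ‖g s‖ * ‖g' s‖) ^ 2 := by ring
    _ ≤ 4 * (∫ s in Ioi r, ‖g s‖ ^ 2) * ∫ s in Ioi r, ‖g' s‖ ^ 2 := by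
      rw [mul_assoc]
      gcongr

end Agmon

section PowWeight

variable {φ : ℝ → ℝ} {r : ℝ} {k : ℕ}

lemma integrableOn_Ioi_of_pow_mul (hr : 0 < r)
    (hφ : IntegrableOn (fun s => s ^ k * φ s) (Ioi r)) : IntegrableOn φ (Ioi r) := by
  have hbdd : ∀ᵐ s ∂volume.restrict (Ioi r), ‖(s ^ k)⁻¹‖ ≤ (r ^ k)⁻¹ := by
    filter_upwards [ae_restrict_mem measurableSet_Ioi] with s (hs : r < s)
    have hs0 : 0 < s := hr.trans hs
    rw [Real.norm_of_nonneg (by positivity)]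
    gcongr
  refine (integrableOn_congr_fun (fun s (hs : r < s) => ?_) measurableSet_Ioi).1
    (hφ.bdd_mul (by fun_prop) hbdd)
  exact inv_mul_cancel_left₀ (pow_ne_zero k (hr.trans hs).ne') (φ s)

lemma pow_mul_setIntegral_Ioi_le (hr : 0 < r) (hφ0 : ∀ s, 0 ≤ φ s)
    (hφ : IntegrableOn (fun s => s ^ k * φ s) (Ioi r)) :
    r ^ k * ∫ s in Ioi r, φ s ≤ ∫ s in Ioi r, s ^ k * φ s := by
  rw [← integral_const_mul]
  refine setIntegral_mono_on ((integrableOn_Ioi_of_pow_mul hr hφ).const_mul _) hφ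
    measurableSet_Ioi fun s (hs : r < s) => ?_
  have := hφ0 s
  gcongr

end PowWeight

/-- Radial functions on a normed space: those whose value at `x` depends only on `‖x‖`. -/
def IsRadial {E β : Type*} [Norm E] (u : E → β) : Prop :=
  ∀ x y, ‖x‖ = ‖y‖ → u x = u y

/-- The radial derivative `∂_r u`, that is, the derivative of `u` at `x` in the direction
`x / ‖x‖`. It vanishes at the origin, where that direction is the junk value `0`. -/
noncomputable def radialDeriv {E F : Type*} [NormedAddCommGroup E] [NormedSpace ℝ E]
    [NormedAddCommGroup F] [NormedSpace ℝ F] (u : E → F) (x : E) : F :=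
  fderiv ℝ u x (‖x‖⁻¹ • x)

lemma IsRadial.comp {E β γ : Type*} [Norm E] {u : E → β} (hu : IsRadial u) (f : β → γ) :
    IsRadial fun x => f (u x) :=
  fun x y hxy => congrArg f (hu x y hxy)

section Radial

variable {E : Type*} [NormedAddCommGroup E] [NormedSpace ℝ E]

lemma IsRadial.apply_norm_smul {β : Type*} {u : E → β} (hu : IsRadial u) {e : E} (he : ‖e‖ = 1)
    (x : E) : u (‖x‖ • e) = u x :=
  hu _ _ (by rw [norm_smul, he, mul_one, norm_norm])

section RadialDeriv

variable {F : Type*} [NormedAddCommGroup F] [NormedSpace ℝ F] {u : E → F} {e : E}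

lemma hasDerivAt_smul_radialDeriv {t : ℝ} (he : ‖e‖ = 1) (ht : 0 < t)
    (hu : DifferentiableAt ℝ u (t • e)) :
    HasDerivAt (fun s : ℝ => u (s • e)) (radialDeriv u (t • e)) t := by
  have hdir : ‖t • e‖⁻¹ • t • e = e := by
    rw [norm_smul, he, mul_one, Real.norm_of_nonneg ht.le, inv_smul_smul₀ ht.ne']
  have hline : HasDerivAt (fun s : ℝ => s • e) e t := by
    simpa only [id, one_smul] using (hasDerivAt_id t).smul_const e
  rw [radialDeriv, hdir]
  exact hu.hasFDerivAt.comp_hasDerivAt t hline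

lemma IsRadial.radialDeriv (hu : IsRadial u) (hdiff : ∀ x ≠ 0, DifferentiableAt ℝ u x) :
    IsRadial (radialDeriv u) := by
  intro x y hxy
  rcases eq_or_ne x 0 with rfl | hx
  · rw [norm_zero, eq_comm, norm_eq_zero] at hxy
    rw [hxy]
  have hderiv : ∀ z : E, z ≠ 0 →
      HasDerivAt (fun s : ℝ => u (s • ‖z‖⁻¹ • z)) (_root_.radialDeriv u z) ‖z‖ := fun z hz => by
    have hz' : ‖z‖ • ‖z‖⁻¹ • z = z := smul_inv_smul₀ (norm_ne_zero_iff.2 hz) z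
    have hunit : ‖‖z‖⁻¹ • z‖ = 1 := norm_smul_inv_norm (𝕜 := ℝ) hz
    simpa only [hz'] using
      hasDerivAt_smul_radialDeriv hunit (norm_pos_iff.2 hz) (hz'.symm ▸ hdiff z hz)
  have hy : y ≠ 0 := norm_ne_zero_iff.1 (hxy ▸ norm_ne_zero_iff.2 hx)
  have hray : (fun s : ℝ => u (s • ‖x‖⁻¹ • x)) = fun s : ℝ => u (s • ‖y‖⁻¹ • y) :=
    funext fun s => hu _ _ (by simp [norm_smul, hx, hy])
  exact (hderiv x hx).unique (by rw [hray, hxy]; exact hderiv y hy)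

end RadialDeriv

variable {φ : E → ℝ} {e : E} {r : ℝ}

lemma IsRadial.indicator_lt_norm_eq (hφ : IsRadial φ) (he : ‖e‖ = 1) :
    {x : E | r < ‖x‖}.indicator φ = fun x => (Ioi r).indicator (fun s => φ (s • e)) ‖x‖ := by
  ext x
  simp only [indicator, mem_ofPred_eq, mem_Ioi, hφ.apply_norm_smul he]

variable [FiniteDimensional ℝ E] [Nontrivial E] [MeasurableSpace E] [BorelSpace E]
  {μ : Measure E} [μ.IsAddHaarMeasure]

lemma IsRadial.integrableOn_lt_norm_iff (hφ : IsRadial φ) (he : ‖e‖ = 1) (hr : 0 ≤ r) :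
    IntegrableOn φ {x : E | r < ‖x‖} μ ↔
      IntegrableOn (fun s => s ^ (finrank ℝ E - 1) * φ (s • e)) (Ioi r) := by
  rw [← integrable_indicator_iff (measurableSet_lt measurable_const measurable_norm),
    hφ.indicator_lt_norm_eq he, integrable_fun_norm_addHaar]
  simp only [smul_eq_mul, ← indicator_mul_right (Ioi r) (fun s : ℝ => s ^ (finrank ℝ E - 1))]
  rw [integrableOn_indicator_iff measurableSet_Ioi, inter_eq_left.2 (Ioi_subset_Ioi hr)]

lemma IsRadial.setIntegral_lt_norm (hφ : IsRadial φ) (he : ‖e‖ = 1) (hr : 0 ≤ r) :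
    ∫ x in {x : E | r < ‖x‖}, φ x ∂μ =
      μ.toSphere.real univ * ∫ s in Ioi r, s ^ (finrank ℝ E - 1) * φ (s • e) := by
  rw [← integral_indicator (measurableSet_lt measurable_const measurable_norm),
    hφ.indicator_lt_norm_eq he, integral_fun_norm_addHaar, μ.toSphere_real_apply_univ]
  simp only [smul_eq_mul, nsmul_eq_mul, ← mul_assoc,
    ← indicator_mul_right (Ioi r) (fun s : ℝ => s ^ (finrank ℝ E - 1))]
  rw [setIntegral_indicator measurableSet_Ioi, inter_eq_right.2 (Ioi_subset_Ioi hr)]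

lemma IsRadial.integrableOn_ray (hφ : IsRadial φ) (he : ‖e‖ = 1) (hr : 0 < r)
    (hint : IntegrableOn φ {x : E | r < ‖x‖} μ) :
    IntegrableOn (fun s : ℝ => φ (s • e)) (Ioi r) :=
  integrableOn_Ioi_of_pow_mul hr ((hφ.integrableOn_lt_norm_iff he hr.le).1 hint)

lemma IsRadial.mul_pow_mul_integral_ray_le (hφ : IsRadial φ) (hφ0 : ∀ x, 0 ≤ φ x)
    (he : ‖e‖ = 1) (hr : 0 < r) (hint : IntegrableOn φ {x : E | r < ‖x‖} μ) :
    μ.toSphere.real univ * r ^ (finrank ℝ E - 1) * ∫ s in Ioi r, φ (s • e) ≤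
      ∫ x in {x : E | r < ‖x‖}, φ x ∂μ := by
  rw [hφ.setIntegral_lt_norm he hr.le, mul_assoc]
  gcongr
  exact pow_mul_setIntegral_Ioi_le hr (fun s => hφ0 _)
    ((hφ.integrableOn_lt_norm_iff he hr.le).1 hint)

end Radial

/-- Radial `H¹` functions: square integrable radial functions, differentiable away from the
origin, with square integrable radial derivative. For a Euclidean norm `‖∂_r u‖ = ‖∇u‖`, so
this controls the full gradient. -/
structure IsRadialH1 {E F : Type*} [NormedAddCommGroup E] [NormedSpace ℝ E] [MeasurableSpace E]
    [NormedAddCommGroup F] [NormedSpace ℝ F] (u : E → F) (μ : Measure E) : Prop where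
  isRadial : IsRadial u
  differentiableAt : ∀ x ≠ 0, DifferentiableAt ℝ u x
  memLp : MemLp u 2 μ
  memLp_radialDeriv : MemLp (radialDeriv u) 2 μ

lemma IsRadial.isRadialH1_schwartzMap {E F : Type*} [NormedAddCommGroup E] [NormedSpace ℝ E]
    [MeasurableSpace E] [BorelSpace E] [SecondCountableTopology E] [NormedAddCommGroup F]
    [NormedSpace ℝ F] {μ : Measure E} [μ.HasTemperateGrowth] {u : SchwartzMap E F}
    (hu : IsRadial u) : IsRadialH1 u μ where
  isRadial := hu
  differentiableAt _ _ := u.differentiableAt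
  memLp := u.memLp 2 μ
  memLp_radialDeriv := by
    have hfderiv : MemLp (fderiv ℝ u) 2 μ := (SchwartzMap.fderivCLM ℝ E F u).memLp 2 μ
    have hdir : Measurable fun x : E => ‖x‖⁻¹ • x := measurable_norm.inv.smul measurable_id
    refine hfderiv.mono ?_ (ae_of_all _ fun x => ?_)
    · exact (ContinuousLinearMap.apply ℝ F : E →L[ℝ] _).aestronglyMeasurable_comp₂
        hdir.aestronglyMeasurable hfderiv.aestronglyMeasurable
    · refine (fderiv ℝ u x).le_of_opNorm_le_of_le le_rfl ?_ |>.trans_eq (mul_one _)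
      rw [norm_smul, norm_inv, norm_norm]
      exact inv_mul_le_one

lemma toSphere_real_univ_pos {E : Type*} [NormedAddCommGroup E] [NormedSpace ℝ E]
    [FiniteDimensional ℝ E] [Nontrivial E] [MeasurableSpace E] [BorelSpace E] (μ : Measure E)
    [μ.IsAddHaarMeasure] : 0 < μ.toSphere.real univ := by
  have : NeZero μ.toSphere := ⟨μ.toSphere_ne_zero⟩
  exact measureReal_univ_pos

namespace IsRadialH1

section Integrability

variable {E F : Type*} [NormedAddCommGroup E] [NormedSpace ℝ E] [MeasurableSpace E]
  [NormedAddCommGroup F] [NormedSpace ℝ F] {μ : Measure E} {u : E → F} {s : Set E}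

lemma integrableOn_norm_sq (hu : IsRadialH1 u μ) : IntegrableOn (fun x => ‖u x‖ ^ 2) s μ :=
  (hu.memLp.integrable_norm_pow two_ne_zero).integrableOn

lemma integrableOn_norm_radialDeriv_sq (hu : IsRadialH1 u μ) :
    IntegrableOn (fun x => ‖radialDeriv u x‖ ^ 2) s μ :=
  (hu.memLp_radialDeriv.integrable_norm_pow two_ne_zero).integrableOn

end Integrability

variable {E F : Type*} [NormedAddCommGroup E] [NormedSpace ℝ E] [FiniteDimensional ℝ E]
  [Nontrivial E] [MeasurableSpace E] [BorelSpace E] [NormedAddCommGroup F]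
  [InnerProductSpace ℝ F] {μ : Measure E} [μ.IsAddHaarMeasure] {u : E → F} {s : ℝ}

lemma norm_pow_four_le (hu : IsRadialH1 u μ) {x : E} (hx : x ≠ 0) :
    (μ.toSphere.real univ * ‖x‖ ^ (finrank ℝ E - 1)) ^ 2 * ‖u x‖ ^ 4 ≤
      4 * (∫ y in {y : E | ‖x‖ < ‖y‖}, ‖u y‖ ^ 2 ∂μ) *
        ∫ y in {y : E | ‖x‖ < ‖y‖}, ‖radialDeriv u y‖ ^ 2 ∂μ := by
  have hr : 0 < ‖x‖ := norm_pos_iff.2 hx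
  set e := ‖x‖⁻¹ • x
  have he : ‖e‖ = 1 := norm_smul_inv_norm (𝕜 := ℝ) hx
  have he0 : e ≠ 0 := norm_ne_zero_iff.1 (he ▸ one_ne_zero)
  have hxe : ‖x‖ • e = x := smul_inv_smul₀ hr.ne' x
  have hu_sq : IsRadial fun y => ‖u y‖ ^ 2 := hu.isRadial.comp (‖·‖ ^ 2)
  have hu'_sq : IsRadial fun y => ‖radialDeriv u y‖ ^ 2 :=
    (hu.isRadial.radialDeriv hu.differentiableAt).comp (‖·‖ ^ 2)
  have hagmon := agmon_inequality_Ioi (r := ‖x‖)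
    (fun t ht => hasDerivAt_smul_radialDeriv he (hr.trans_le ht)
      (hu.differentiableAt _ (smul_ne_zero (hr.trans_le ht).ne' he0)))
    (hu_sq.integrableOn_ray he hr hu.integrableOn_norm_sq)
    (hu'_sq.integrableOn_ray he hr hu.integrableOn_norm_radialDeriv_sq)
  rw [hxe] at hagmon
  set W := μ.toSphere.real univ * ‖x‖ ^ (finrank ℝ E - 1)
  calc W ^ 2 * ‖u x‖ ^ 4
      ≤ W ^ 2 * (4 * (∫ t in Ioi ‖x‖, ‖u (t • e)‖ ^ 2) *
          ∫ t in Ioi ‖x‖, ‖radialDeriv u (t • e)‖ ^ 2) := by gcongr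
    _ = 4 * (W * ∫ t in Ioi ‖x‖, ‖u (t • e)‖ ^ 2) *
          (W * ∫ t in Ioi ‖x‖, ‖radialDeriv u (t • e)‖ ^ 2) := by ring
    _ ≤ _ := by
      gcongr
      · exact hu_sq.mul_pow_mul_integral_ray_le (fun _ => by positivity) he hr
          hu.integrableOn_norm_sq
      · exact hu'_sq.mul_pow_mul_integral_ray_le (fun _ => by positivity) he hr
          hu.integrableOn_norm_radialDeriv_sq

lemma norm_pow_four_le_of_lt_norm (hu : IsRadialH1 u μ) (hs : 0 < s) {x : E} (hx : s < ‖x‖) :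
    ‖u x‖ ^ 4 ≤ 4 / μ.toSphere.real univ ^ 2 / s ^ (2 * (finrank ℝ E - 1)) *
      (∫ y in {y : E | s < ‖y‖}, ‖u y‖ ^ 2 ∂μ) *
        ∫ y in {y : E | s < ‖y‖}, ‖radialDeriv u y‖ ^ 2 ∂μ := by
  have hσ : 0 < μ.toSphere.real univ := toSphere_real_univ_pos μ
  have hsub : {y : E | ‖x‖ < ‖y‖} ⊆ {y | s < ‖y‖} := fun y hy => hx.trans hy
  have hmass : ∫ y in {y : E | ‖x‖ < ‖y‖}, ‖u y‖ ^ 2 ∂μ ≤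
      ∫ y in {y : E | s < ‖y‖}, ‖u y‖ ^ 2 ∂μ :=
    setIntegral_mono_set hu.integrableOn_norm_sq (ae_of_all _ fun y => by positivity)
      hsub.eventuallyLE
  have henergy : ∫ y in {y : E | ‖x‖ < ‖y‖}, ‖radialDeriv u y‖ ^ 2 ∂μ ≤
      ∫ y in {y : E | s < ‖y‖}, ‖radialDeriv u y‖ ^ 2 ∂μ :=
    setIntegral_mono_set hu.integrableOn_norm_radialDeriv_sq
      (ae_of_all _ fun y => by positivity) hsub.eventuallyLE
  have hscaled : (μ.toSphere.real univ * s ^ (finrank ℝ E - 1)) ^ 2 * ‖u x‖ ^ 4 ≤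
      4 * (∫ y in {y : E | s < ‖y‖}, ‖u y‖ ^ 2 ∂μ) *
        ∫ y in {y : E | s < ‖y‖}, ‖radialDeriv u y‖ ^ 2 ∂μ :=
    calc (μ.toSphere.real univ * s ^ (finrank ℝ E - 1)) ^ 2 * ‖u x‖ ^ 4
        ≤ (μ.toSphere.real univ * ‖x‖ ^ (finrank ℝ E - 1)) ^ 2 * ‖u x‖ ^ 4 := by gcongr
      _ ≤ 4 * (∫ y in {y : E | ‖x‖ < ‖y‖}, ‖u y‖ ^ 2 ∂μ) *
          ∫ y in {y : E | ‖x‖ < ‖y‖}, ‖radialDeriv u y‖ ^ 2 ∂μ :=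
        hu.norm_pow_four_le (norm_pos_iff.1 (hs.trans hx))
      _ ≤ _ := by gcongr
  refine ((le_div_iff₀' (by positivity)).2 hscaled).trans_eq ?_
  rw [mul_pow, ← pow_mul, mul_comm _ 2]
  ring

lemma norm_pow_six_le_of_lt_norm (hu : IsRadialH1 u μ) (hs : 0 < s) {x : E} (hx : s < ‖x‖) :
    ‖u x‖ ^ 6 ≤ 4 / μ.toSphere.real univ ^ 2 / s ^ (2 * (finrank ℝ E - 1)) *
      (∫ y in {y : E | s < ‖y‖}, ‖u y‖ ^ 2 ∂μ) *
        (∫ y in {y : E | s < ‖y‖}, ‖radialDeriv u y‖ ^ 2 ∂μ) * ‖u x‖ ^ 2 := by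
  rw [show ‖u x‖ ^ 6 = ‖u x‖ ^ 4 * ‖u x‖ ^ 2 by ring]
  gcongr
  exact hu.norm_pow_four_le_of_lt_norm hs hx

lemma integrableOn_norm_pow_six (hu : IsRadialH1 u μ) (hs : 0 < s) :
    IntegrableOn (fun x => ‖u x‖ ^ 6) {x : E | s < ‖x‖} μ :=
  (hu.integrableOn_norm_sq.const_mul _).mono'
    (hu.memLp.aestronglyMeasurable.norm.pow 6).restrict <|
    (ae_restrict_mem (measurableSet_lt measurable_const measurable_norm)).mono fun _ hx =>
      (Real.norm_of_nonneg (by positivity)).trans_le (hu.norm_pow_six_le_of_lt_norm hs hx)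

lemma setIntegral_norm_pow_six_le (hu : IsRadialH1 u μ) (hs : 0 < s) :
    ∫ x in {x : E | s < ‖x‖}, ‖u x‖ ^ 6 ∂μ ≤
      4 / μ.toSphere.real univ ^ 2 / s ^ (2 * (finrank ℝ E - 1)) *
        (∫ x in {x : E | s < ‖x‖}, ‖u x‖ ^ 2 ∂μ) ^ 2 *
          ∫ x in {x : E | s < ‖x‖}, ‖radialDeriv u x‖ ^ 2 ∂μ := by
  refine (setIntegral_mono_on (hu.integrableOn_norm_pow_six hs)
    (hu.integrableOn_norm_sq.const_mul _)
    (measurableSet_lt measurable_const measurable_norm)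
    fun x hx => hu.norm_pow_six_le_of_lt_norm hs hx).trans_eq ?_
  rw [integral_const_mul]
  ring

lemma integral_deriv_mul_setIntegral_norm_pow_six_le {f : ℝ → ℝ} {m : ℝ} (hu : IsRadialH1 u μ)
    (hm : 0 < m) (hf : MonotoneOn f (Ici m)) (hf' : IntegrableOn (deriv f) (Ioi m)) :
    ∫ s in Ioi m, deriv f s * ∫ x in {x : E | s < ‖x‖}, ‖u x‖ ^ 6 ∂μ ≤
      4 / μ.toSphere.real univ ^ 2 / m ^ (2 * (finrank ℝ E - 1)) * (∫ x, ‖u x‖ ^ 2 ∂μ) ^ 2 *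
        ∫ s in Ioi m, deriv f s * ∫ x in {x : E | s < ‖x‖}, ‖radialDeriv u x‖ ^ 2 ∂μ := by
  rw [← integral_const_mul]
  refine setIntegral_mono_on
    (integrableOn_mul_setIntegral_lt measurable_norm hf' (hu.integrableOn_norm_pow_six hm))
    ((integrableOn_mul_setIntegral_lt measurable_norm hf'
      hu.integrableOn_norm_radialDeriv_sq).const_mul _)
    measurableSet_Ioi fun s (hs : m < s) => ?_
  have hderiv : 0 ≤ deriv f s := deriv_nonneg_of_monotoneOn_Ici hf hs
  have hmass : ∫ x in {x : E | s < ‖x‖}, ‖u x‖ ^ 2 ∂μ ≤ ∫ x, ‖u x‖ ^ 2 ∂μ :=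
    setIntegral_le_integral (hu.memLp.integrable_norm_pow two_ne_zero)
      (ae_of_all _ fun x => by positivity)
  calc deriv f s * ∫ x in {x : E | s < ‖x‖}, ‖u x‖ ^ 6 ∂μ
      ≤ deriv f s * (4 / μ.toSphere.real univ ^ 2 / s ^ (2 * (finrank ℝ E - 1)) *
          (∫ x in {x : E | s < ‖x‖}, ‖u x‖ ^ 2 ∂μ) ^ 2 *
            ∫ x in {x : E | s < ‖x‖}, ‖radialDeriv u x‖ ^ 2 ∂μ) := by
        gcongr
        exact hu.setIntegral_norm_pow_six_le (hm.trans hs)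
    _ ≤ deriv f s * (4 / μ.toSphere.real univ ^ 2 / m ^ (2 * (finrank ℝ E - 1)) *
          (∫ x, ‖u x‖ ^ 2 ∂μ) ^ 2 *
            ∫ x in {x : E | s < ‖x‖}, ‖radialDeriv u x‖ ^ 2 ∂μ) := by gcongr
    _ = _ := by ring

end IsRadialH1

theorem stmt17_general {E F : Type*} [NormedAddCommGroup E] [NormedSpace ℝ E]
    [FiniteDimensional ℝ E] [Nontrivial E] [MeasurableSpace E] [BorelSpace E]
    [NormedAddCommGroup F] [InnerProductSpace ℝ F] (μ : Measure E) [μ.IsAddHaarMeasure] :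
    ∃ C > (0 : ℝ), ∀ u : E → F, IsRadialH1 u μ → ∀ f₀ : ℝ → ℝ, ∀ m : ℝ, 0 < m →
      ContinuousOn f₀ (Ici m) → DifferentiableOn ℝ f₀ (Ioi m) → f₀ m = 0 →
      MonotoneOn f₀ (Ici m) → BddAbove (f₀ '' Ici m) →
      (∫ x in {x : E | m < ‖x‖}, f₀ ‖x‖ * ‖u x‖ ^ 6 ∂μ ≤
        C * ∫ s in Ioi m, deriv f₀ s * ∫ x in {x : E | s < ‖x‖}, ‖u x‖ ^ 6 ∂μ) ∧
      ∫ x in {x : E | m < ‖x‖}, f₀ ‖x‖ * ‖u x‖ ^ 6 ∂μ ≤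
        C / m ^ (2 * (finrank ℝ E - 1)) * (∫ x, ‖u x‖ ^ 2 ∂μ) ^ 2 *
          ∫ x in {x : E | m < ‖x‖}, f₀ ‖x‖ * ‖radialDeriv u x‖ ^ 2 ∂μ := by
  refine ⟨max 1 (4 / μ.toSphere.real univ ^ 2), by positivity,
    fun u hu f₀ m hm hfc hfd hfm hmono hbdd => ?_⟩
  have hderiv : ∀ s ∈ Ioi m, 0 ≤ deriv f₀ s := fun s hs => deriv_nonneg_of_monotoneOn_Ici hmono hs
  have hint : IntegrableOn (deriv f₀) (Ioi m) :=
    integrableOn_deriv_of_monotoneOn_Ici hfc hfd hmono hbdd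
  rw [setIntegral_comp_mul_eq_integral_deriv_mul measurable_norm
      (hu.integrableOn_norm_pow_six hm) hfc hfd hfm hint,
    setIntegral_comp_mul_eq_integral_deriv_mul measurable_norm
      hu.integrableOn_norm_radialDeriv_sq hfc hfd hfm hint]
  constructor
  · exact le_mul_of_one_le_left (setIntegral_nonneg measurableSet_Ioi fun s hs =>
      mul_nonneg (hderiv s hs) (by positivity)) (le_max_left _ _)
  · refine (hu.integral_deriv_mul_setIntegral_norm_pow_six_le hm hmono hint).trans ?_
    gcongr
    · exact setIntegral_nonneg measurableSet_Ioi fun s hs =>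
        mul_nonneg (hderiv s hs) (by positivity)
    · exact le_max_right _ _

/-- Estimate (Eqn:FubInteg2): the weighted exterior `L⁶` integral of a radial
Schwartz function is controlled by the derivative of the weight applied to the
exterior `L⁶` norms, and in turn by `m⁻⁴‖u‖⁴_{L²}` times the weighted gradient
integral. -/
theorem stmt17 : ∃ C > (0 : ℝ),
    ∀ u : SchwartzMap (EuclideanSpace ℝ (Fin 3)) ℂ,
    (∀ x y : EuclideanSpace ℝ (Fin 3), ‖x‖ = ‖y‖ → u x = u y) →
    ∀ f₀ : ℝ → ℝ, ∀ m : ℝ, 0 < m →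
    ContDiff ℝ 1 f₀ →
    (∀ s, 0 ≤ f₀ s) → (∀ s ∈ Icc (0 : ℝ) m, f₀ s = 0) →
    MonotoneOn f₀ (Ici (0 : ℝ)) → (∃ B : ℝ, ∀ s, f₀ s ≤ B) →
      ((∫ x in {x : EuclideanSpace ℝ (Fin 3) | m < ‖x‖},
          f₀ ‖x‖ * ‖u x‖ ^ 6) ≤
        C * ∫ s in Ioi m, deriv f₀ s *
          ∫ x in {x : EuclideanSpace ℝ (Fin 3) | s < ‖x‖}, ‖u x‖ ^ 6) ∧
      ((∫ x in {x : EuclideanSpace ℝ (Fin 3) | m < ‖x‖},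
          f₀ ‖x‖ * ‖u x‖ ^ 6) ≤
        C / m ^ 4 * (∫ x : EuclideanSpace ℝ (Fin 3), ‖u x‖ ^ 2) ^ 2 *
          ∫ x in {x : EuclideanSpace ℝ (Fin 3) | m < ‖x‖},
            f₀ ‖x‖ * ‖fderiv ℝ (fun y => u y) x (‖x‖⁻¹ • x)‖ ^ 2) := by
  obtain ⟨C, hC, h⟩ := stmt17_general (F := ℂ) (volume : Measure (EuclideanSpace ℝ (Fin 3)))
  rw [finrank_euclideanSpace_fin] at h
  exact ⟨C, hC, fun u hu f₀ m hm hf _ hfm hmono ⟨B, hB⟩ =>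
    h u (IsRadial.isRadialH1_schwartzMap hu) f₀ m hm hf.continuous.continuousOn
      hf.differentiable_one.differentiableOn (hfm m ⟨hm.le, le_rfl⟩)
      (hmono.mono (Ici_subset_Ici.2 hm.le)) ⟨B, forall_mem_image.2 fun s _ => hB s⟩⟩
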